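/- GFF upper bound on the variance of the height function (Corollary 3.1): Assume G is connected with boundary vertex ∂. For every f: V → ℝ with f_∂ = 0, ν_★[(Σ_{v∈V} h_v f_v)²] ≤ C · Σ_{v,v'∈V} f_v f_{v'} 𝐆(v,v')/deg(v'), where C := sup_{t∈ℝ} |𝒰''(t)| < ∞ and 𝐆(v,v') is the Green's function of simple random walk on G killed upon hitting ∂ (the expected number of visits to v' of the walk started at v before hitting ∂). -/

import Mathlib

/-!
The proof is by duality with the spin model. Writing `f = d* d g` off the boundary, summation by
parts (`sum_mul_divg_grad`) turns `∑ h f` into `∑ₑ (dh)ₑ ωₑ` and `∑ f g` into `∑ₑ ωₑ²`, with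
`ω = dg`. So it suffices to bound the second moment of `n · ω` over integer gradients `n = dh`
with weight `∏ₑ p(nₑ)`.

Dropping the gradient constraint but inserting a character `cos (n · a)`, the sum over all
`n : E → ℤ` factorises: `∑ₙ ∏ p(nₑ) cos (n · (a + tω)) = exp (-∑ₑ 𝒰(aₑ + tωₑ))`. Two derivatives
at `t = 0` give
`∑ₙ ∏ p(nₑ) (n · ω)² cos (n · a) = exp (-∑ₑ 𝒰(aₑ)) (∑ₑ 𝒰''(aₑ) ωₑ² - (∑ₑ 𝒰'(aₑ) ωₑ)²)`,
which is at most `C ‖ω‖² ∑ₙ ∏ p(nₑ) cos (n · a)` for every `a` (`twisted_second_moment_le`).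

Finally, connectivity shows that gradients are exactly the integer solutions of a linear system
`M n = 0` (`exists_gradient_equations`), so that averaging over `a = 2π Mᵀθ`, with `θ` uniform on
the torus, restricts the inequality to gradients (`gradient_second_moment_le`).
-/

open MeasureTheory Real
noncomputable section

/-- Gradient of a `G`-valued function on the vertices: `(df)_e = f(tgt e) - f(src e)`. -/
def grad {V E G : Type*} [AddCommGroup G] (src tgt : E → V) (f : V → G) : E → G :=
  fun e => f (tgt e) - f (src e)

/-- Divergence of a `G`-valued 1-form: `(d*ω)_x = Σ_{e : tgt e = x} ω_e - Σ_{e : src e = x} ω_e`. -/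
def divg {V E G : Type*} [Fintype E] [DecidableEq V] [AddCommGroup G]
    (src tgt : E → V) (ω : E → G) : V → G :=
  fun x => (∑ e, if tgt e = x then ω e else 0) - ∑ e, if src e = x then ω e else 0

/-- Connectivity of the (multi)graph encoded by `src, tgt : E → V`. -/
def IsConn {V E : Type*} (src tgt : E → V) : Prop :=
  ∀ x y : V, Relation.ReflTransGen
    (fun a b => ∃ e, (src e = a ∧ tgt e = b) ∨ (src e = b ∧ tgt e = a)) x y

/-- The spin weight `w(α) = Σ_{n∈ℤ} e^{-𝒱(n)} e^{inα}`, written with `p n = e^{-𝒱(n)}`. -/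
def wgt (p : ℤ → ℝ) (α : ℝ) : ℝ := ∑' n : ℤ, p n * Real.cos (n * α)

/-- The dual spin potential `𝒰 = -log w`. -/
def spinU (p : ℤ → ℝ) : ℝ → ℝ := fun t => -Real.log (wgt p t)

/-- Expectation with respect to the ★-height measure `ν_★(h) ∝ exp(-Σ_e 𝒱((dh)_e))` on
functions `h : V → ℤ` with `h ∂ = 0`, with `p = e^{-𝒱}`. -/
def starHeightExp {V E : Type*} [Fintype E] (src tgt : E → V) (bd : V)
    (p : ℤ → ℝ) (F : (V → ℤ) → ℝ) : ℝ :=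
  (∑' h : {h : V → ℤ // h bd = 0}, F h.1 * ∏ e, p (grad src tgt h.1 e)) /
    ∑' h : {h : V → ℤ // h bd = 0}, ∏ e, p (grad src tgt h.1 e)

/-! ### Series over `E → ℤ` and trigonometric series -/

/-- Sum-product interchange over finitely many integer coordinates: Fubini for counting measure. -/
lemma summable_pi_prod {E : Type*} [Fintype E] (F : E → ℤ → ℂ) (hF : ∀ e, Summable (F e)) :
    (Summable fun n : E → ℤ => ∏ e, F e (n e)) ∧
      ∑' n : E → ℤ, ∏ e, F e (n e) = ∏ e, ∑' k, F e k := by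
  have hcount : (Measure.pi fun _ : E => (Measure.count : Measure ℤ)) = Measure.count := by
    refine Measure.ext_of_singleton fun n => ?_
    simp [Measure.pi_singleton]
  have hint : ∀ e, Integrable (F e) Measure.count := fun e =>
    integrable_count_iff.2 (hF e).norm
  have hI := Integrable.fintype_prod (μ := fun _ : E => (Measure.count : Measure ℤ)) hint
  have hP := integral_fintype_prod_eq_prod (μ := fun _ : E => (Measure.count : Measure ℤ)) F
  rw [hcount] at hI hP
  refine ⟨(integrable_count_iff.1 hI).of_norm, ?_⟩
  rw [integral_countable hI] at hP
  simp_rw [integral_countable (hint _)] at hP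
  simpa [Measure.real] using hP

/-- Two termwise differentiations of `t ↦ ∑ cᵢ cos (xᵢ + t yᵢ)`. Applied both to the spin weight
itself and to the multivariate series along the direction `ω`. -/
lemma hasDerivAt_cos_series {ι : Type*} (c x y : ι → ℝ) (h0 : Summable c)
    (h1 : Summable fun i => c i * y i) (h2 : Summable fun i => c i * y i ^ 2) :
    (∀ t, HasDerivAt (fun t => ∑' i, c i * Real.cos (x i + t * y i))
      (∑' i, -(c i * y i) * Real.sin (x i + t * y i)) t) ∧
    (∀ t, HasDerivAt (fun t => ∑' i, -(c i * y i) * Real.sin (x i + t * y i))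
      (∑' i, -(c i * y i ^ 2) * Real.cos (x i + t * y i)) t) := by
  have hin : ∀ i t, HasDerivAt (fun t => x i + t * y i) (y i) t := fun i t => by
    simpa using ((hasDerivAt_id t).mul_const (y i)).const_add (x i)
  constructor
  · refine hasDerivAt_tsum (y₀ := 0) h1.norm (fun i t => ?_) (fun i t => ?_) ?_
    · refine (((hin i t).cos).const_mul (c i)).congr_deriv ?_
      ring
    · rw [norm_mul, norm_neg]
      exact mul_le_of_le_one_right (norm_nonneg _) (Real.abs_sin_le_one _)
    · refine Summable.of_norm_bounded h0.norm fun i => ?_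
      rw [norm_mul]
      exact mul_le_of_le_one_right (norm_nonneg _) (Real.abs_cos_le_one _)
  · refine hasDerivAt_tsum (y₀ := 0) h2.norm (fun i t => ?_) (fun i t => ?_) ?_
    · refine (((hin i t).sin).const_mul (-(c i * y i))).congr_deriv ?_
      ring
    · rw [norm_mul, norm_neg]
      exact mul_le_of_le_one_right (norm_nonneg _) (Real.abs_cos_le_one _)
    · refine Summable.of_norm_bounded h1.norm fun i => ?_
      rw [norm_mul, norm_neg]
      exact mul_le_of_le_one_right (norm_nonneg _) (Real.abs_sin_le_one _)

lemma summable_one_add_sq_mul {p : ℤ → ℝ} (hsum : Summable fun n : ℤ => (n : ℝ) ^ 2 * p n) :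
    Summable fun n : ℤ => (1 + (n : ℝ) ^ 2) * p n := by
  have hp : Summable p := by
    refine hsum.norm.of_norm_bounded_eventually ?_
    filter_upwards [(Set.finite_singleton (0 : ℤ)).compl_mem_cofinite] with n hn
    have hn' : (1 : ℝ) ≤ (n : ℝ) ^ 2 := by
      have : 1 ≤ n ^ 2 := by
        have : n ≠ 0 := hn
        have := sq_pos_of_ne_zero this
        omega
      exact_mod_cast this
    rw [norm_mul, Real.norm_of_nonneg (by positivity : (0 : ℝ) ≤ (n : ℝ) ^ 2)]
    exact le_mul_of_one_le_left (norm_nonneg _) hn'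
  simpa [add_mul] using hp.add hsum

lemma abs_le_one_add_sq (x : ℝ) : |x| ≤ 1 + x ^ 2 := by
  rw [← sq_abs]; nlinarith [sq_nonneg (|x| - 1), abs_nonneg x]

/-! ### The spin weight and the dual potential -/

/-- First derivative of the spin weight. -/
def wgt₁ (p : ℤ → ℝ) (t : ℝ) : ℝ := ∑' n : ℤ, -(p n * n) * Real.sin (n * t)

/-- Second derivative of the spin weight. -/
def wgt₂ (p : ℤ → ℝ) (t : ℝ) : ℝ := ∑' n : ℤ, -(p n * n ^ 2) * Real.cos (n * t)

section Weight

variable {p : ℤ → ℝ}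

lemma summable_weights (hsum : Summable fun n : ℤ => (n : ℝ) ^ 2 * p n) :
    Summable p ∧ (Summable fun n : ℤ => p n * n) ∧ Summable fun n : ℤ => p n * (n : ℝ) ^ 2 := by
  have h := (summable_one_add_sq_mul hsum).norm
  refine ⟨.of_norm_bounded h fun n => ?_, .of_norm_bounded h fun n => ?_, ?_⟩
  · rw [norm_mul]
    refine le_mul_of_one_le_left (norm_nonneg _) ?_
    rw [Real.norm_of_nonneg (by positivity)]
    nlinarith [sq_nonneg (n : ℝ)]
  · rw [mul_comm, norm_mul, norm_mul]
    refine mul_le_mul_of_nonneg_right ?_ (norm_nonneg _)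
    rw [Real.norm_of_nonneg (by positivity : (0 : ℝ) ≤ 1 + (n : ℝ) ^ 2)]
    exact abs_le_one_add_sq _
  · simpa only [mul_comm] using hsum

lemma hasDerivAt_wgt (hsum : Summable fun n : ℤ => (n : ℝ) ^ 2 * p n) (t : ℝ) :
    HasDerivAt (wgt p) (wgt₁ p t) t ∧ HasDerivAt (wgt₁ p) (wgt₂ p t) t := by
  obtain ⟨h0, h1, h2⟩ := summable_weights hsum
  obtain ⟨d1, d2⟩ := hasDerivAt_cos_series p (fun _ => 0) (fun n : ℤ => (n : ℝ)) h0 h1 h2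
  have e0 : wgt p = fun t => ∑' n : ℤ, p n * Real.cos (0 + t * n) := by
    ext t; simp only [wgt, zero_add, mul_comm t]
  have e1 : wgt₁ p = fun t => ∑' n : ℤ, -(p n * n) * Real.sin (0 + t * n) := by
    ext t; simp only [wgt₁, zero_add, mul_comm t]
  have e2 : wgt₂ p t = ∑' n : ℤ, -(p n * (n : ℝ) ^ 2) * Real.cos (0 + t * n) := by
    simp only [wgt₂, zero_add, mul_comm t]
  refine ⟨?_, ?_⟩
  · rw [e1, e0]; exact d1 t
  · rw [e2, e1]; exact d2 t

lemma hasDerivAt_spinU (hsum : Summable fun n : ℤ => (n : ℝ) ^ 2 * p n)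
    (hw : ∀ α : ℝ, 0 < wgt p α) (t : ℝ) :
    HasDerivAt (spinU p) (-(wgt₁ p t / wgt p t)) t ∧
    HasDerivAt (fun t => -(wgt₁ p t / wgt p t))
      (-((wgt₂ p t * wgt p t - wgt₁ p t * wgt₁ p t) / wgt p t ^ 2)) t := by
  obtain ⟨d1, d2⟩ := hasDerivAt_wgt hsum t
  exact ⟨(d1.log (hw t).ne').neg, (d2.div d1 (hw t).ne').neg⟩

lemma deriv_deriv_spinU (hsum : Summable fun n : ℤ => (n : ℝ) ^ 2 * p n)
    (hw : ∀ α : ℝ, 0 < wgt p α) (t : ℝ) :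
    deriv (deriv (spinU p)) t =
      -((wgt₂ p t * wgt p t - wgt₁ p t * wgt₁ p t) / wgt p t ^ 2) := by
  have : deriv (spinU p) = fun t => -(wgt₁ p t / wgt p t) :=
    funext fun t => (hasDerivAt_spinU hsum hw t).1.deriv
  rw [this]
  exact (hasDerivAt_spinU hsum hw t).2.deriv

/-- `𝒰'' = -w''/w + (w'/w)²`, where `w'` and `w''` are bounded by the moments of `p`, and the
continuous periodic positive function `w` is bounded below by its positive minimum. -/
lemma bddAbove_deriv_deriv_spinU (hsum : Summable fun n : ℤ => (n : ℝ) ^ 2 * p n)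
    (hw : ∀ α : ℝ, 0 < wgt p α) :
    BddAbove (Set.range fun t : ℝ => |deriv (deriv (spinU p)) t|) := by
  obtain ⟨h0, h1, h2⟩ := summable_weights hsum
  have hcont : Continuous (wgt p) :=
    continuous_iff_continuousAt.2 fun t => (hasDerivAt_wgt hsum t).1.continuousAt
  have hper : Function.Periodic (wgt p) (2 * Real.pi) := fun t => by
    simp only [wgt, mul_add]
    refine tsum_congr fun n => ?_
    rw [Real.cos_add_int_mul_two_pi]
  have hK := hper.compact_of_continuous (by positivity) hcont
  obtain ⟨_, ⟨⟨t₀, rfl⟩, hmin⟩⟩ := hK.exists_isLeast (Set.range_nonempty _)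
  have hm : ∀ t, wgt p t₀ ≤ wgt p t := fun t => hmin ⟨t, rfl⟩
  have hm0 := hw t₀
  set m := wgt p t₀
  have b1 : ∀ t, |wgt₁ p t| ≤ ∑' n : ℤ, ‖p n * n‖ := fun t => by
    rw [wgt₁, ← Real.norm_eq_abs]
    refine tsum_of_norm_bounded h1.norm.hasSum fun n => ?_
    rw [norm_mul, norm_neg]
    exact mul_le_of_le_one_right (norm_nonneg _) (Real.abs_sin_le_one _)
  have b2 : ∀ t, |wgt₂ p t| ≤ ∑' n : ℤ, ‖p n * (n : ℝ) ^ 2‖ := fun t => by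
    rw [wgt₂, ← Real.norm_eq_abs]
    refine tsum_of_norm_bounded h2.norm.hasSum fun n => ?_
    rw [norm_mul, norm_neg]
    exact mul_le_of_le_one_right (norm_nonneg _) (Real.abs_cos_le_one _)
  set B1 := ∑' n : ℤ, ‖p n * n‖
  set B2 := ∑' n : ℤ, ‖p n * (n : ℝ) ^ 2‖
  refine ⟨B2 / m + (B1 / m) ^ 2, ?_⟩
  rintro _ ⟨t, rfl⟩
  simp only [deriv_deriv_spinU hsum hw]
  have e : (wgt₂ p t * wgt p t - wgt₁ p t * wgt₁ p t) / wgt p t ^ 2 =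
      wgt₂ p t / wgt p t - (wgt₁ p t / wgt p t) ^ 2 := by
    field_simp [(hw t).ne']
  rw [abs_neg, e]
  refine (abs_sub _ _).trans (add_le_add ?_ ?_)
  · rw [abs_div, abs_of_pos (hw t)]
    exact div_le_div₀ ((abs_nonneg _).trans (b2 t)) (b2 t) hm0 (hm t)
  · rw [abs_pow, abs_div, abs_of_pos (hw t)]
    refine pow_le_pow_left₀ (by have := hw t; positivity) ?_ 2
    exact div_le_div₀ ((abs_nonneg _).trans (b1 t)) (b1 t) hm0 (hm t)

/-- By the symmetry of `p`, the cosine series `wgt p` is the full characteristic function. -/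
lemma hasSum_exp (hsym : ∀ n : ℤ, p (-n) = p n)
    (hp : Summable p) (α : ℝ) :
    HasSum (fun n : ℤ => (p n : ℂ) * Complex.exp ((n * α : ℝ) * Complex.I)) (wgt p α) := by
  have hc : Summable fun n : ℤ => p n * Real.cos (n * α) :=
    Summable.of_norm_bounded hp.norm fun n => by
      rw [norm_mul]
      exact mul_le_of_le_one_right (norm_nonneg _) (Real.abs_cos_le_one _)
  have hs : Summable fun n : ℤ => p n * Real.sin (n * α) :=
    Summable.of_norm_bounded hp.norm fun n => by
      rw [norm_mul]
      exact mul_le_of_le_one_right (norm_nonneg _) (Real.abs_sin_le_one _)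
  -- The sine series is odd under `n ↦ -n`.
  have hs0 : ∑' n : ℤ, p n * Real.sin (n * α) = 0 := by
    have h := (Equiv.neg ℤ).tsum_eq fun n : ℤ => p n * Real.sin (n * α)
    simp only [Equiv.neg_apply, hsym, Int.cast_neg, neg_mul, Real.sin_neg, mul_neg, tsum_neg] at h
    linarith
  have h := (Complex.hasSum_ofReal.2 hc.hasSum).add
    ((Complex.hasSum_ofReal.2 hs.hasSum).mul_right Complex.I)
  rw [hs0] at h
  convert h using 1
  · ext n
    rw [Complex.exp_mul_I, ← Complex.ofReal_cos, ← Complex.ofReal_sin]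
    push_cast; ring
  · simp [wgt]

end Weight

/-! ### Product weights on `E → ℤ` -/

lemma one_add_sum_le_prod {E : Type*} (s : Finset E) (x : E → ℝ) (hx : ∀ e, 0 ≤ x e) :
    1 + ∑ e ∈ s, x e ≤ ∏ e ∈ s, (1 + x e) := by
  classical
  induction s using Finset.induction_on with
  | empty => simp
  | insert e s he ih =>
    rw [Finset.sum_insert he, Finset.prod_insert he]
    have h1 : 0 ≤ ∑ i ∈ s, x i := Finset.sum_nonneg fun i _ => hx i
    nlinarith [hx e, mul_nonneg (hx e) h1, mul_le_mul_of_nonneg_left ih (hx e)]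

section Product

variable {E : Type*} [Fintype E] {p : ℤ → ℝ}

lemma tsum_prod_cos (hsym : ∀ n : ℤ, p (-n) = p n) (hp : Summable p) (a : E → ℝ) :
    ∑' n : E → ℤ, (∏ e, p (n e)) * Real.cos (∑ e, n e * a e) = ∏ e, wgt p (a e) := by
  obtain ⟨hS, hT⟩ := summable_pi_prod
    (fun e (k : ℤ) => (p k : ℂ) * Complex.exp ((k * a e : ℝ) * Complex.I))
    (fun e => (hasSum_exp hsym hp (a e)).summable)
  simp_rw [(hasSum_exp hsym hp _).tsum_eq] at hT
  have := congrArg Complex.re hT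
  rw [Complex.re_tsum hS, ← Complex.ofReal_prod, Complex.ofReal_re] at this
  rw [← this]
  refine tsum_congr fun n => ?_
  rw [Finset.prod_mul_distrib, ← Complex.exp_sum, ← Finset.sum_mul, ← Complex.ofReal_sum,
    ← Complex.ofReal_prod, Complex.re_ofReal_mul, Complex.exp_ofReal_mul_I_re]

/-- All moments up to order two of a linear form are dominated by the product weight
`∏ (1 + nₑ²) p(nₑ)`, since `1 + ∑ nₑ² ≤ ∏ (1 + nₑ²)`. -/
lemma summable_prod_moments (hsum : Summable fun n : ℤ => (n : ℝ) ^ 2 * p n) (ω : E → ℝ) :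
    (Summable fun n : E → ℤ => ∏ e, p (n e)) ∧
    (Summable fun n : E → ℤ => (∏ e, p (n e)) * ∑ e, n e * ω e) ∧
    (Summable fun n : E → ℤ => (∏ e, p (n e)) * (∑ e, n e * ω e) ^ 2) := by
  have hq := (summable_pi_prod (fun (_ : E) (k : ℤ) => (((1 + (k : ℝ) ^ 2) * p k : ℝ) : ℂ))
    (fun _ => Complex.summable_ofReal.2 (summable_one_add_sq_mul hsum))).1.norm
  have hone : ∀ n : E → ℤ, 1 + ∑ e, (n e : ℝ) ^ 2 ≤ ∏ e, (1 + (n e : ℝ) ^ 2) := fun n =>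
    one_add_sum_le_prod Finset.univ (fun e => (n e : ℝ) ^ 2)
      fun e => sq_nonneg _
  have hcs : ∀ n : E → ℤ, (∑ e, n e * ω e) ^ 2 ≤ (∑ e, ω e ^ 2) * ∏ e, (1 + (n e : ℝ) ^ 2) := by
    intro n
    refine (Finset.sum_mul_sq_le_sq_mul_sq _ _ _).trans ?_
    rw [mul_comm]
    refine mul_le_mul_of_nonneg_left ?_ (by positivity)
    linarith [hone n]
  have hone' : ∀ n : E → ℤ, 1 ≤ ∏ e, (1 + (n e : ℝ) ^ 2) := fun n => by
    have : 0 ≤ ∑ e, (n e : ℝ) ^ 2 := by positivity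
    linarith [hone n]
  have hn : ∀ n : E → ℤ, ‖∏ e, (((1 + (n e : ℝ) ^ 2) * p (n e) : ℝ) : ℂ)‖ =
      ‖∏ e, p (n e)‖ * ∏ e, (1 + (n e : ℝ) ^ 2) := by
    intro n
    rw [← Complex.ofReal_prod, Complex.norm_real, Finset.prod_mul_distrib, norm_mul, mul_comm,
      Real.norm_of_nonneg (r := ∏ e, (1 + (n e : ℝ) ^ 2)) (by positivity)]
  simp only [hn] at hq
  have hω : 0 ≤ ∑ e, ω e ^ 2 := by positivity
  refine ⟨.of_norm_bounded hq fun n => ?_,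
    .of_norm_bounded (hq.mul_right (1 + ∑ e, ω e ^ 2)) fun n => ?_,
    .of_norm_bounded (hq.mul_right (∑ e, ω e ^ 2)) fun n => ?_⟩
  · exact le_mul_of_one_le_right (norm_nonneg _) (hone' n)
  · rw [norm_mul, mul_assoc]
    refine mul_le_mul_of_nonneg_left ((abs_le_one_add_sq _).trans ?_) (norm_nonneg _)
    nlinarith [hcs n, hone' n]
  · rw [norm_mul, mul_assoc]
    refine mul_le_mul_of_nonneg_left ?_ (norm_nonneg _)
    rw [Real.norm_of_nonneg (sq_nonneg _)]
    linarith [hcs n]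

/-- The variance bound on all of `E → ℤ`, twisted by an arbitrary character `a`. With
`Z(t) = ∏ w(aₑ + t ωₑ) = exp (-∑ 𝒰(aₑ + t ωₑ))`, the left side is `-Z''(0)`, and
`-Z''(0) = Z(0) (∑ 𝒰''(aₑ) ωₑ² - (∑ 𝒰'(aₑ) ωₑ)²)` The subtracted
square is nonnegative and each second derivative is at most the supremum. -/
lemma twisted_second_moment_le (hsym : ∀ n : ℤ, p (-n) = p n)
    (hsum : Summable fun n : ℤ => (n : ℝ) ^ 2 * p n) (hw : ∀ α : ℝ, 0 < wgt p α)
    (ω a : E → ℝ) :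
    ∑' n : E → ℤ, (∏ e, p (n e)) * (∑ e, n e * ω e) ^ 2 * Real.cos (∑ e, n e * a e) ≤
      (⨆ t : ℝ, |deriv (deriv (spinU p)) t|) * (∑ e, ω e ^ 2) *
        ∑' n : E → ℤ, (∏ e, p (n e)) * Real.cos (∑ e, n e * a e) := by
  have hp := (summable_weights hsum).1
  obtain ⟨s0, s1, s2⟩ := summable_prod_moments hsum ω
  obtain ⟨d1, d2⟩ := hasDerivAt_cos_series (fun n : E → ℤ => ∏ e, p (n e))
    (fun n => ∑ e, n e * a e) (fun n => ∑ e, n e * ω e) s0 s1 s2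
  have hU := hasDerivAt_spinU hsum hw
  have hdd := deriv_deriv_spinU hsum hw
  set C := ⨆ t : ℝ, |deriv (deriv (spinU p)) t| with hC
  set U := spinU p
  set U1 : ℝ → ℝ := fun t => -(wgt₁ p t / wgt p t) with hU1
  set U2 : ℝ → ℝ := fun t => -((wgt₂ p t * wgt p t - wgt₁ p t * wgt₁ p t) / wgt p t ^ 2) with hU2
  have hUC : ∀ t, U2 t ≤ C := fun t => by
    have := le_ciSup (bddAbove_deriv_deriv_spinU hsum hw) t
    rw [hdd t] at this
    exact (le_abs_self _).trans this
  have hlin : ∀ e t, HasDerivAt (fun t => a e + t * ω e) (ω e) t := fun e t => by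
    simpa using ((hasDerivAt_id t).mul_const (ω e)).const_add (a e)
  have hS : ∀ t, HasDerivAt (fun t => -∑ e, U (a e + t * ω e))
      (-∑ e, U1 (a e + t * ω e) * ω e) t := fun t =>
    (HasDerivAt.fun_sum fun e _ => (hU (a e + t * ω e)).1.comp t (hlin e t)).neg
  have hS1 : ∀ t, HasDerivAt (fun t => -∑ e, U1 (a e + t * ω e) * ω e)
      (-∑ e, U2 (a e + t * ω e) * ω e * ω e) t := fun t =>
    (HasDerivAt.fun_sum fun e _ =>
      ((hU (a e + t * ω e)).2.comp t (hlin e t)).mul_const (ω e)).neg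
  have hG : (fun t => ∑' n : E → ℤ,
      (∏ e, p (n e)) * Real.cos (∑ e, n e * a e + t * ∑ e, n e * ω e)) =
      fun t => Real.exp (-∑ e, U (a e + t * ω e)) := by
    ext t
    have h := tsum_prod_cos hsym hp (fun e => a e + t * ω e)
    have e1 : ∀ n : E → ℤ, ∑ e, (n e : ℝ) * (a e + t * ω e) =
        ∑ e, n e * a e + t * ∑ e, n e * ω e := fun n => by
      rw [Finset.mul_sum, ← Finset.sum_add_distrib]
      exact Finset.sum_congr rfl fun e _ => by ring
    simp only [e1] at h
    rw [h, ← Finset.sum_neg_distrib, Real.exp_sum]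
    refine Finset.prod_congr rfl fun e _ => ?_
    simp [U, spinU, Real.exp_log (hw _)]
  -- Uniqueness of derivatives compares the series for `Z'` and `Z''` with those of the exponential.
  have hG1 := funext fun t => (d1 t).unique (by rw [hG]; exact (hS t).exp)
  have hG2 := (d2 0).unique (by rw [hG1]; exact ((hS 0).exp.mul (hS1 0)))
  have hG0 := congrFun hG 0
  simp only [zero_mul, add_zero, neg_mul, tsum_neg] at hG0 hG2
  rw [hG0]
  have key : ∑ e, U2 (a e) * ω e * ω e ≤ C * ∑ e, ω e ^ 2 := by
    rw [Finset.mul_sum]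
    refine Finset.sum_le_sum fun e _ => ?_
    nlinarith [mul_le_mul_of_nonneg_right (hUC (a e)) (sq_nonneg (ω e))]
  -- The squared term has a favourable sign and is dropped.
  have hpos := Real.exp_pos (-∑ e, U (a e))
  nlinarith [mul_le_mul_of_nonneg_left key hpos.le,
    mul_nonneg hpos.le (sq_nonneg (∑ e, U1 (a e) * ω e))]

end Product

/-! ### Restriction to gradients by averaging over characters -/

/-- Orthogonality of characters on the torus `[0,1]^E`. -/
lemma integral_cos_torus {E : Type*} [Fintype E] (m : E → ℤ) :
    ∫ θ : E → ℝ, Real.cos (∑ e, 2 * Real.pi * θ e * m e)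
      ∂(Measure.pi fun _ : E => (volume : Measure ℝ).restrict (Set.Ioc 0 1)) =
      if m = 0 then 1 else 0 := by
  classical
  split_ifs with hm
  · subst hm
    simp [Measure.real, Measure.pi_univ]
  · obtain ⟨e₀, he₀⟩ := Function.ne_iff.1 hm
    have h := integral_fintype_prod_eq_prod
      (μ := fun _ : E => (volume : Measure ℝ).restrict (Set.Ioc 0 1))
      (fun e (θ : ℝ) => Complex.exp ((2 * Real.pi * m e * Complex.I) * θ))
    rw [Finset.prod_eq_zero (Finset.mem_univ e₀)] at h
    · have hre : ∀ θ : E → ℝ, Real.cos (∑ e, 2 * Real.pi * θ e * m e) =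
          (∏ e, Complex.exp ((2 * Real.pi * m e * Complex.I) * θ e)).re := fun θ => by
        rw [← Complex.exp_sum, ← Complex.exp_ofReal_mul_I_re]
        congr 2
        push_cast
        rw [Finset.sum_mul]
        exact Finset.sum_congr rfl fun e _ => by ring
      simp only [hre]
      have hint : Integrable (fun θ : E → ℝ =>
          ∏ e, Complex.exp ((2 * Real.pi * m e * Complex.I) * θ e))
          (Measure.pi fun _ : E => (volume : Measure ℝ).restrict (Set.Ioc 0 1)) := by
        refine Integrable.of_bound (C := 1)
          (Continuous.aestronglyMeasurable (by fun_prop)) (.of_forall fun θ => ?_)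
        rw [norm_prod]
        refine Finset.prod_le_one (fun _ _ => norm_nonneg _) fun e _ => le_of_eq ?_
        rw [Complex.norm_exp]
        simp
      have h2 := integral_re hint
      simp only [RCLike.re_eq_complex_re] at h2
      rw [h2, h]; simp
    · rw [← intervalIntegral.integral_of_le zero_le_one, integral_exp_mul_complex]
      · have := Complex.exp_int_mul_two_pi_mul_I (m e₀)
        rw [show (2 * Real.pi * m e₀ * Complex.I) * ((1 : ℝ) : ℂ) =
          m e₀ * (2 * Real.pi * Complex.I) by push_cast; ring, this]
        simp
      · have : (m e₀ : ℂ) ≠ 0 := Int.cast_ne_zero.2 he₀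
        have := Real.pi_ne_zero
        simp_all

/-- Summing a gradient along a path from `x` to `y`: `s` is the signed edge count of the path. -/
lemma exists_path_form {V E : Type*} [Fintype E] {src tgt : E → V}
    (hconn : IsConn src tgt) (x y : V) :
    ∃ s : E → ℤ, ∀ h : V → ℤ, ∑ e, s e * grad src tgt h e = h y - h x := by
  classical
  induction hconn x y with
  | refl => exact ⟨0, by simp⟩
  | tail _ hbc ih =>
    obtain ⟨s, hs⟩ := ih
    obtain ⟨e, ⟨rfl, rfl⟩ | ⟨rfl, rfl⟩⟩ := hbc
    · refine ⟨s + Pi.single e 1, fun h => ?_⟩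
      simp only [Pi.add_apply, add_mul, Finset.sum_add_distrib, hs]
      simp [Pi.single_apply, grad]
    · refine ⟨s - Pi.single e 1, fun h => ?_⟩
      simp only [Pi.sub_apply, sub_mul, Finset.sum_sub_distrib, hs]
      simp [Pi.single_apply, grad]

/-- The gradients are the solutions of a homogeneous integer linear system. For each edge `e`, row
`e` of `M` says that `nₑ` equals the difference of the sums of `n` along the chosen paths from `bd`
to the two endpoints of `e`. -/
lemma exists_gradient_equations {V E : Type*} [Fintype E] {src tgt : E → V}
    (hconn : IsConn src tgt) (bd : V) :
    ∃ M : E → E → ℤ, ∀ n : E → ℤ, (∀ e, ∑ e', M e e' * n e' = 0) ↔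
      ∃ h : {h : V → ℤ // h bd = 0}, grad src tgt h.1 = n := by
  classical
  choose s hs using fun v => exists_path_form hconn bd v
  have hM : ∀ (n : E → ℤ) e, ∑ e', ((Pi.single e 1 : E → ℤ) e' - (s (tgt e) e' - s (src e) e')) * n e' =
      n e - (∑ e', s (tgt e) e' * n e' - ∑ e', s (src e) e' * n e') := fun n e => by
    simp [sub_mul, Finset.sum_sub_distrib, Pi.single_apply]
  refine ⟨fun e e' => (Pi.single e 1 : E → ℤ) e' - (s (tgt e) e' - s (src e) e'), fun n => ?_⟩
  simp only [hM]
  constructor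
  · intro h
    refine ⟨⟨fun v => ∑ e', s v e' * n e' - ∑ e', s bd e' * n e', sub_self _⟩, ?_⟩
    ext e
    simp only [grad]
    linarith [h e]
  · rintro ⟨h, rfl⟩ e
    simp only [hs]
    simp [grad]

lemma grad_injective {V E : Type*} [Fintype E] {src tgt : E → V}
    (hconn : IsConn src tgt) (bd : V) :
    Function.Injective fun h : {h : V → ℤ // h bd = 0} => grad src tgt h.1 := by
  intro h h' hh
  ext v
  obtain ⟨s, hs⟩ := exists_path_form hconn bd v
  have h1 := hs h.1
  have h2 := hs h'.1
  simp only at hh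
  rw [hh, h2, h.2, h'.2] at h1
  linarith

/-- The variance bound on gradients, obtained by averaging `twisted_second_moment_le` over the
characters `a = 2π Mᵀθ` with `θ` uniform in `[0,1]^E`, which averages `cos (n · a)` to the indicator
of `M n = 0`. -/
lemma gradient_second_moment_le {V E : Type*} [Fintype E] {src tgt : E → V}
    (hconn : IsConn src tgt) (bd : V) {p : ℤ → ℝ} (hsym : ∀ n : ℤ, p (-n) = p n)
    (hsum : Summable fun n : ℤ => (n : ℝ) ^ 2 * p n) (hw : ∀ α : ℝ, 0 < wgt p α) (ω : E → ℝ) :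
    ∑' h : {h : V → ℤ // h bd = 0},
        (∑ e, ((grad src tgt h.1 e : ℤ) : ℝ) * ω e) ^ 2 * ∏ e, p (grad src tgt h.1 e) ≤
      (⨆ t : ℝ, |deriv (deriv (spinU p)) t|) * (∑ e, ω e ^ 2) *
        ∑' h : {h : V → ℤ // h bd = 0}, ∏ e, p (grad src tgt h.1 e) := by
  obtain ⟨M, hM⟩ := exists_gradient_equations hconn bd
  obtain ⟨s0, -, s2⟩ := summable_prod_moments hsum ω
  set K := (⨆ t : ℝ, |deriv (deriv (spinU p)) t|) * (∑ e, ω e ^ 2)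
  set c : (E → ℤ) → ℝ := fun n => ∏ e, p (n e) with hc
  -- The inequality to prove is that `d` has nonpositive sum over the gradients.
  set d : (E → ℤ) → ℝ := fun n => c n * (∑ e, n e * ω e) ^ 2 - K * c n with hd
  have hdS : Summable d := s2.sub (s0.mul_left K)
  set ρ := Measure.pi fun _ : E => (volume : Measure ℝ).restrict (Set.Ioc 0 1) with hρ
  have hcosS : ∀ (b : (E → ℤ) → ℝ) (x : (E → ℤ) → ℝ), Summable b →
      Summable fun n => b n * Real.cos (x n) := fun b x hb =>
    Summable.of_norm_bounded hb.norm fun n => by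
      rw [norm_mul]
      exact mul_le_of_le_one_right (norm_nonneg _) (Real.abs_cos_le_one _)
  have hpt : ∀ θ : E → ℝ,
      ∑' n : E → ℤ, d n * Real.cos (∑ e, 2 * Real.pi * θ e * (∑ e', M e e' * n e' : ℤ)) ≤ 0 := by
    intro θ
    have h := twisted_second_moment_le hsym hsum hw ω
      (fun e' => ∑ e, 2 * Real.pi * θ e * M e e')
    have e1 : ∀ n : E → ℤ, ∑ e', (n e' : ℝ) * ∑ e, 2 * Real.pi * θ e * M e e' =
        ∑ e, 2 * Real.pi * θ e * (∑ e', M e e' * n e' : ℤ) := fun n => by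
      push_cast
      simp only [Finset.mul_sum]
      rw [Finset.sum_comm]
      exact Finset.sum_congr rfl fun _ _ => Finset.sum_congr rfl fun _ _ => by ring
    simp only [e1] at h
    simp only [hd, sub_mul, mul_assoc K]
    rw [Summable.tsum_sub (hcosS _ _ s2) ((hcosS _ _ s0).mul_left K), tsum_mul_left]
    linarith
  have hint : ∑' n : E → ℤ, d n * (if (fun e => ∑ e', M e e' * n e') = 0 then 1 else 0) ≤ 0 := by
    have h := integral_tsum_of_summable_integral_norm (μ := ρ)
      (F := fun (n : E → ℤ) (θ : E → ℝ) =>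
        d n * Real.cos (∑ e, 2 * Real.pi * θ e * (∑ e', M e e' * n e' : ℤ)))
      (fun n => ?_) ?_
    · simp only [integral_const_mul, hρ] at h
      simp only [integral_cos_torus] at h
      rw [h]
      exact integral_nonpos hpt
    · refine Integrable.of_bound (C := ‖d n‖)
        (Continuous.aestronglyMeasurable (by fun_prop)) (.of_forall fun θ => ?_)
      rw [norm_mul]
      exact mul_le_of_le_one_right (norm_nonneg _) (Real.abs_cos_le_one _)
    · refine Summable.of_nonneg_of_le (fun n => integral_nonneg fun _ => norm_nonneg _)
        (fun n => ?_) hdS.norm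
      refine (integral_mono_of_nonneg (.of_forall fun _ => norm_nonneg _)
        (integrable_const ‖d n‖) (.of_forall fun θ => ?_)).trans_eq ?_
      · simp only [norm_mul]
        exact mul_le_of_le_one_right (norm_nonneg _) (Real.abs_cos_le_one _)
      · simp [hρ, Measure.real, Measure.pi_univ]
  have hinj := grad_injective hconn bd
  rw [← hinj.tsum_eq] at hint
  · have e2 : ∀ h : {h : V → ℤ // h bd = 0},
        (fun e => ∑ e', M e e' * grad src tgt h.1 e') = 0 := fun h =>
      funext ((hM _).2 ⟨h, rfl⟩)
    simp only [e2, if_true, mul_one, hd] at hint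
    have h2 := s2.comp_injective hinj
    have h0 := s0.comp_injective hinj
    simp only [Function.comp_def] at h2 h0
    rw [Summable.tsum_sub h2 (h0.mul_left K), tsum_mul_left] at hint
    simp only [mul_comm (_ ^ 2)]
    linarith
  · intro n hn
    by_contra hcon
    refine hn ?_
    have : ¬ (fun e => ∑ e', M e e' * n e') = 0 := fun h0 =>
      hcon ((hM n).1 fun e => congrFun h0 e)
    simp [this]

/-! ### Summation by parts and conclusion -/

/-- Discrete integration by parts: `divg` is the adjoint of `grad`. -/
lemma sum_mul_divg_grad {V E : Type*} [Fintype V] [Fintype E] [DecidableEq V]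
    (src tgt : E → V) (u : V → ℝ) (ω : E → ℝ) :
    ∑ v, u v * divg src tgt ω v = ∑ e, grad src tgt u e * ω e := by
  simp only [divg, mul_sub, Finset.mul_sum, Finset.sum_sub_distrib, grad, sub_mul]
  congr 1 <;> rw [Finset.sum_comm] <;> simp

/-- **GFF upper bound on the variance of the height function.**
For every `f` vanishing at the boundary vertex, `ν_★[(h,f)²] ≤ C (f, Δ⁻¹ f)`, where
`C = sup_t |𝒰''(t)| < ∞` and `Δ⁻¹ f` is encoded by the function `g`, vanishing at `∂` and
solving `Δ g = f` off `∂`; note `(f, Δ⁻¹ f) = Σ_{v,v'} f_v f_{v'} 𝐆(v,v')/deg(v')`. -/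
theorem gff_upper_bound_on_variance
    {V E : Type*} [Fintype V] [Fintype E] [DecidableEq V]
    (src tgt : E → V) (hconn : IsConn src tgt) (bd : V)
    (p : ℤ → ℝ)
    (hsym : ∀ n : ℤ, p (-n) = p n)
    (hnonneg : ∀ n : ℤ, 0 ≤ p n)
    (hsum : Summable fun n : ℤ => (n : ℝ) ^ 2 * p n)
    (hw : ∀ α : ℝ, 0 < wgt p α)
    (f g : V → ℝ) (hf : f bd = 0) (hg : g bd = 0)
    (hgreen : ∀ x : V, x ≠ bd → divg src tgt (grad src tgt g) x = f x) :
    BddAbove (Set.range fun t : ℝ => |deriv (deriv (spinU p)) t|) ∧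
    starHeightExp src tgt bd p (fun h => (∑ v, (h v : ℝ) * f v) ^ 2)
      ≤ (⨆ t : ℝ, |deriv (deriv (spinU p)) t|) * ∑ v, f v * g v := by
  refine ⟨bddAbove_deriv_deriv_spinU hsum hw, ?_⟩
  -- The equation for `g` may fail at `bd`, where `u` vanishes.
  have hpair : ∀ u : V → ℝ, u bd = 0 →
      ∑ v, u v * f v = ∑ e, grad src tgt u e * grad src tgt g e := by
    intro u hu
    rw [← sum_mul_divg_grad]
    refine Finset.sum_congr rfl fun v _ => ?_
    by_cases hv : v = bd
    · simp [hv, hu]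
    · rw [hgreen v hv]
  have henergy : ∑ v, f v * g v = ∑ e, grad src tgt g e ^ 2 := by
    simp only [mul_comm (f _), hpair g hg, sq]
  have hmain := gradient_second_moment_le hconn bd hsym hsum hw (grad src tgt g)
  have hcast : ∀ h : {h : V → ℤ // h bd = 0}, ∑ v, (h.1 v : ℝ) * f v =
      ∑ e, ((grad src tgt h.1 e : ℤ) : ℝ) * grad src tgt g e := by
    intro h
    rw [hpair (fun v => (h.1 v : ℝ)) (by simp [h.2])]
    simp [grad]
  rw [starHeightExp, henergy]
  simp only [hcast]
  -- `div_le_of_le_mul₀` also covers a vanishing partition function, where the quotient is `0`.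
  refine div_le_of_le_mul₀ (tsum_nonneg fun h => Finset.prod_nonneg fun e _ => hnonneg _) ?_ hmain
  exact mul_nonneg (Real.iSup_nonneg fun t => abs_nonneg _) (by positivity)
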